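/- Let (A, m) and (B, n) be Artinian Gorenstein local K-algebras, both with Hilbert function {1,n,n,1}. Then A and B are isomorphic as K-algebras if and only if their associated graded rings gr_m(A) and gr_n(B) are isomorphic as graded K-algebras. -/

import Mathlib

/-- The maximal ideal `M = (x_1, …, x_n)` of `R = K[[x_1,…,x_n]]`,
i.e. the ideal of power series with zero constant term. -/
noncomputable def mxR (K : Type*) [Field K] (n : ℕ) : Ideal (MvPowerSeries (Fin n) K) :=
  RingHom.ker (MvPowerSeries.constantCoeff (σ := Fin n) (R := K))

/-- The Hilbert function of `A = R/I` where `R = K[[x_1,…,x_n]]`: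
`HF_A(i) = dim_K (m^i/m^(i+1)) = dim_K A/m^(i+1) - dim_K A/m^i`, computed via
`A/m^j = R/(I + M^j)` where `M = (x_1,…,x_n)`. -/
noncomputable def hilbQ {K : Type*} [Field K] {n : ℕ}
    (I : Ideal (MvPowerSeries (Fin n) K)) (i : ℕ) : ℕ :=
  Module.finrank K (MvPowerSeries (Fin n) K ⧸ (I ⊔ mxR K n ^ (i + 1))) -
    Module.finrank K (MvPowerSeries (Fin n) K ⧸ (I ⊔ mxR K n ^ i))

/-- `dim_K` of the socle `(0 :_A m)` of `A = R/I`, where `m = M/I` is the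
maximal ideal of `A`.  The Artinian local ring `A = R/I` is Gorenstein iff
this equals `1`. -/
noncomputable def socDimQ {K : Type*} [Field K] {n : ℕ}
    (I : Ideal (MvPowerSeries (Fin n) K)) : ℕ :=
  Module.finrank K
    ((Submodule.colon (⊥ : Ideal (MvPowerSeries (Fin n) K ⧸ I))
      ((mxR K n).map (Ideal.Quotient.mk I))).restrictScalars K)

/-- The total degree `|α| = α 1 + ⋯ + α n` of a multi-index. -/
def degM {n : ℕ} (α : Fin n →₀ ℕ) : ℕ := ∑ i, α i

/-- The ideal `I^*` of `R` generated by the initial forms `f^*` of the elements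
`f ∈ I` (for `f ≠ 0` of order `d`, `f^*` is the degree-`d` homogeneous component
of `f`; the set below consists of all such initial forms, together with `0`).
For an ideal `I` with `R/I` Artinian, `R/I^*` is (canonically isomorphic to) the
associated graded ring `gr_m(R/I) = ⊕_{i ≥ 0} m^i/m^(i+1)` of `A = R/I`. -/
noncomputable def initialIdeal {K : Type*} [Field K] {n : ℕ}
    (I : Ideal (MvPowerSeries (Fin n) K)) : Ideal (MvPowerSeries (Fin n) K) :=
  Ideal.span { g | ∃ f ∈ I, ∃ d : ℕ,
    (∀ α : Fin n →₀ ℕ, degM α < d → MvPowerSeries.coeff (R := K) α f = 0) ∧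
    (∀ α : Fin n →₀ ℕ, MvPowerSeries.coeff (R := K) α g =
      if degM α = d then MvPowerSeries.coeff (R := K) α f else 0) }

/-- The space of homogeneous forms of degree `d` in `R = K[[x_1,…,x_n]]`. -/
noncomputable def homComponent (K : Type*) [Field K] (n d : ℕ) :
    Submodule K (MvPowerSeries (Fin n) K) where
  carrier := {f | ∀ α : Fin n →₀ ℕ, degM α ≠ d → MvPowerSeries.coeff (R := K) α f = 0}
  zero_mem' := fun α _ => by simp
  add_mem' := fun {a b} ha hb α h => by rw [map_add, ha α h, hb α h, add_zero]
  smul_mem' := fun c f hf α h => by rw [map_smul, hf α h, smul_zero]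

/-- The degree-`d` graded piece of the associated graded ring `gr_m(A) = R/I^*`,
namely the image in `R/I^*` of the degree-`d` homogeneous forms of `R`. -/
noncomputable def gradePiece {K : Type*} [Field K] {n : ℕ}
    (I : Ideal (MvPowerSeries (Fin n) K)) (d : ℕ) :
    Submodule K (MvPowerSeries (Fin n) K ⧸ initialIdeal I) :=
  Submodule.map (Ideal.Quotient.mkₐ K (initialIdeal I)).toLinearMap (homComponent K n d)

/-! An isomorphism `R/I ≃ R/J` lifts to an endomorphism of `R = K[[x_1,…,x_n]]`, and the linear
parts of the lifts of an isomorphism and of its inverse are mutually inverse graded automorphisms of `R`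
which match the initial ideals.

Conversely, `R/I` is isomorphic to its own associated graded ring. As `R/I` is Gorenstein, `I` is
the largest ideal contained in the kernel of a functional `L`, which may be chosen with `L 1 = 0`.
The Hilbert function `{1,n,n,1}` makes `p ↦ (L p, (L (p x_j))_j)` map `M^2` onto `K × K^n`, so there
are `p_i ∈ M^2` with `L p_i = -L x_i` and `L (p_i x_j) = -L (x_i x_j) / 2`. The substitution
`x_i ↦ x_i + p_i` turns `L` into its degree-three part, and hence `I` into a homogeneous ideal.
-/

open MvPowerSeries

theorem mem_span_X_pow_iff {σ R : Type*} [Finite σ] [CommRing R] {f : MvPowerSeries σ R} {k : ℕ} :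
    f ∈ Ideal.span (Set.range (X : σ → MvPowerSeries σ R)) ^ k ↔
      ∀ α : σ →₀ ℕ, α.degree < k → coeff α f = 0 := by
  -- Power series form the adic completion of the polynomial ring, which reduces the claim to
  -- truncations, where it is known.
  let P := MvPolynomial.idealOfVars σ R
  let e := (toAdicCompletionAlgEquiv σ R).toLinearEquiv
  have span_X_pow : Ideal.span (Set.range (X : σ → MvPowerSeries σ R)) ^ k =
      (P ^ k).map (algebraMap (MvPolynomial σ R) (MvPowerSeries σ R)) := by
    rw [Ideal.map_pow, Ideal.map_span, ← Set.range_comp]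
    congr 3
    ext1 i
    exact (MvPolynomial.coe_X i).symm
  have map_e : (P ^ k • (⊤ : Submodule (MvPolynomial σ R) (MvPowerSeries σ R))).map
      e.toLinearMap = (AdicCompletion.eval P (MvPolynomial σ R) k).ker := by
    rw [Submodule.map_smul'', Submodule.map_top, LinearEquiv.range,
      AdicCompletion.pow_smul_top_eq_ker_eval (MvPolynomial.idealOfVars_fg σ R)]
  have eval_e : AdicCompletion.eval P (MvPolynomial σ R) k (e f) =
      Ideal.Quotient.mk (P ^ k • ⊤) (truncTotal k f) := toAdicCompletion_apply_eq_mk_truncTotal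
  calc f ∈ Ideal.span (Set.range (X : σ → MvPowerSeries σ R)) ^ k
      ↔ f ∈ (P ^ k • ⊤ : Submodule (MvPolynomial σ R) (MvPowerSeries σ R)) := by
        rw [span_X_pow, Ideal.smul_top_eq_map, Submodule.restrictScalars_mem]
    _ ↔ e f ∈ (AdicCompletion.eval P (MvPolynomial σ R) k).ker := by
        rw [← map_e]
        exact e.injective.mem_set_image.symm
    _ ↔ truncTotal k f ∈ P ^ k := by
        rw [LinearMap.mem_ker, eval_e, Ideal.Quotient.eq_zero_iff_mem, smul_eq_mul, Ideal.mul_top]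
    _ ↔ ∀ α : σ →₀ ℕ, α.degree < k → coeff α f = 0 := by
        rw [MvPolynomial.mem_pow_idealOfVars_iff']
        exact forall₂_congr fun α hα => by rw [coeff_truncTotal f hα]

section OrderFiltration

variable {K : Type*} [Field K] {n : ℕ}

theorem degM_eq_degree (α : Fin n →₀ ℕ) : degM α = α.degree :=
  (Finsupp.degree_eq_sum α).symm

theorem mem_mxR_iff {f : MvPowerSeries (Fin n) K} : f ∈ mxR K n ↔ constantCoeff f = 0 :=
  RingHom.mem_ker

theorem mxR_eq_span_X : mxR K n = Ideal.span (Set.range X) := by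
  ext f
  rw [← pow_one (Ideal.span _), mem_span_X_pow_iff, mem_mxR_iff]
  simp [Finsupp.degree_eq_zero_iff]

theorem X_mem_mxR (i : Fin n) : X i ∈ mxR K n :=
  mem_mxR_iff.mpr (constantCoeff_X i)

theorem mem_mxR_pow_iff {f : MvPowerSeries (Fin n) K} {k : ℕ} :
    f ∈ mxR K n ^ k ↔ ∀ α : Fin n →₀ ℕ, α.degree < k → coeff α f = 0 := by
  rw [mxR_eq_span_X, mem_span_X_pow_iff]

theorem mem_homComponent_iff {f : MvPowerSeries (Fin n) K} {d : ℕ} :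
    f ∈ homComponent K n d ↔ ∀ α : Fin n →₀ ℕ, α.degree ≠ d → coeff α f = 0 :=
  forall_congr' fun α => by rw [degM_eq_degree]

theorem homogeneousComponent_mem_homComponent (d : ℕ) (f : MvPowerSeries (Fin n) K) :
    homogeneousComponent d f ∈ homComponent K n d :=
  mem_homComponent_iff.mpr fun α hα => by rw [coeff_homogeneousComponent, if_neg hα]

theorem homogeneousComponent_of_mem_homComponent {f : MvPowerSeries (Fin n) K} {d : ℕ}
    (hf : f ∈ homComponent K n d) (e : ℕ) :
    homogeneousComponent e f = if e = d then f else 0 := by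
  ext α
  rw [coeff_homogeneousComponent, apply_ite (coeff α), map_zero]
  grind [mem_homComponent_iff]

theorem homComponent_le_mxR_pow (d : ℕ) :
    homComponent K n d ≤ (mxR K n ^ d).restrictScalars K :=
  fun _ hf => mem_mxR_pow_iff.mpr fun α hα => mem_homComponent_iff.mp hf α hα.ne

theorem homogeneousComponent_of_mem_mxR_pow {f : MvPowerSeries (Fin n) K} {d e : ℕ}
    (hf : f ∈ mxR K n ^ d) (hed : e < d) : homogeneousComponent e f = 0 := by
  ext α
  rw [coeff_homogeneousComponent, map_zero]
  grind [mem_mxR_pow_iff]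

theorem sub_homogeneousComponent_mem_mxR_pow {f : MvPowerSeries (Fin n) K} {d : ℕ}
    (hf : f ∈ mxR K n ^ d) : f - homogeneousComponent d f ∈ mxR K n ^ (d + 1) := by
  refine mem_mxR_pow_iff.mpr fun α hα => ?_
  rw [map_sub, coeff_homogeneousComponent]
  grind [mem_mxR_pow_iff]

theorem sub_sum_homogeneousComponent_mem_mxR_pow (f : MvPowerSeries (Fin n) K) (k : ℕ) :
    f - ∑ d ∈ Finset.range k, homogeneousComponent d f ∈ mxR K n ^ k := by
  refine mem_mxR_pow_iff.mpr fun α hα => ?_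
  simp [coeff_homogeneousComponent, hα]

theorem mem_homComponent_iff_isHomogeneous {f : MvPowerSeries (Fin n) K} {d : ℕ} :
    f ∈ homComponent K n d ↔ f.IsHomogeneous d :=
  forall_congr' fun α => by rw [degM_eq_degree, Finsupp.degree_eq_weight_one, not_imp_comm]; rfl

theorem homComponent_mul_le (d e : ℕ) :
    homComponent K n d * homComponent K n e ≤ homComponent K n (d + e) := by
  simp only [Submodule.mul_le, mem_homComponent_iff_isHomogeneous]
  exact fun f hf g hg => hf.mul hg

theorem homogeneousComponent_mul_of_mem_homComponent {g : MvPowerSeries (Fin n) K} {e : ℕ}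
    (hg : g ∈ homComponent K n e) (d : ℕ) (f : MvPowerSeries (Fin n) K) :
    homogeneousComponent (d + e) (f * g) = homogeneousComponent d f * g := by
  let f' := ∑ i ∈ Finset.range (d + 1), homogeneousComponent i f
  have tail_mul : (f - f') * g ∈ mxR K n ^ (d + 1 + e) := by
    rw [pow_add]
    exact Ideal.mul_mem_mul (sub_sum_homogeneousComponent_mem_mxR_pow f _)
      (homComponent_le_mxR_pow e hg)
  have hc_mul (i : ℕ) : homogeneousComponent (d + e) (homogeneousComponent i f * g) =
      if i = d then homogeneousComponent d f * g else 0 := by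
    rw [homogeneousComponent_of_mem_homComponent (homComponent_mul_le i e
      (Submodule.mul_mem_mul (homogeneousComponent_mem_homComponent i f) hg))]
    grind
  rw [← sub_add_cancel f f', add_mul, map_add,
    homogeneousComponent_of_mem_mxR_pow tail_mul (by lia), zero_add, Finset.sum_mul, map_sum]
  simp [hc_mul, f', -map_sum]

theorem homComponent_eq_map_homogeneousSubmodule (d : ℕ) :
    homComponent K n d = (MvPolynomial.homogeneousSubmodule (Fin n) K d).map
      (MvPolynomial.coeToMvPowerSeries.algHom K).toLinearMap := by
  apply le_antisymm
  · intro f hf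
    refine ⟨truncTotal (d + 1) f, fun α hα => ?_, ?_⟩
    · rw [coeff_truncTotal_eq_ite] at hα
      have degree_eq : α.degree = d := by grind [mem_homComponent_iff]
      rwa [Finsupp.degree_eq_weight_one] at degree_eq
    · ext α
      simp only [AlgHom.toLinearMap_apply, MvPolynomial.coeToMvPowerSeries.algHom_apply,
        Algebra.algebraMap_self, map_id, RingHom.id_apply, MvPolynomial.coeff_coe,
        coeff_truncTotal_eq_ite]
      grind [mem_homComponent_iff]
  · rintro _ ⟨p, hp, rfl⟩
    refine mem_homComponent_iff.mpr fun α hα => ?_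
    simpa using hp.coeff_eq_zero hα

theorem homComponent_eq_span_X_pow (d : ℕ) :
    homComponent K n d = Submodule.span K (Set.range X) ^ d := by
  rw [homComponent_eq_map_homogeneousSubmodule, ← MvPolynomial.homogeneousSubmodule_one_pow,
    Submodule.map_pow, MvPolynomial.homogeneousSubmodule_one_eq_span_X, Submodule.map_span,
    ← Set.range_comp]
  congr 3
  ext1 i
  simp

theorem linearMap_ext_of_homComponent {W : Type*} [AddCommGroup W] [Module K W]
    {D E : MvPowerSeries (Fin n) K →ₗ[K] W} {k : ℕ}
    (hom : ∀ d < k, ∀ f ∈ homComponent K n d, D f = E f) (tail : ∀ f ∈ mxR K n ^ k, D f = E f) :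
    D = E := by
  ext f
  rw [← sub_add_cancel f (∑ d ∈ Finset.range k, homogeneousComponent d f), map_add, map_add,
    tail _ (sub_sum_homogeneousComponent_mem_mxR_pow f k), map_sum, map_sum]
  congr 1
  exact Finset.sum_congr rfl fun d hd => hom d (Finset.mem_range.mp hd) _
    (homogeneousComponent_mem_homComponent d f)

end OrderFiltration

section Endomorphisms

variable (σ R : Type*) [CommSemiring R] in
/-- The augmentation of a power series ring as a homomorphism of algebras. -/
noncomputable def constantCoeffAlgHom : MvPowerSeries σ R →ₐ[R] R :=
  { constantCoeff with commutes' := fun c => constantCoeff_C c }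

variable {K : Type*} [Field K]

theorem algHom_eq_constantCoeff {σ : Type*} (ε : MvPowerSeries σ K →ₐ[K] K)
    (f : MvPowerSeries σ K) : ε f = constantCoeff f := by
  by_contra hne
  have unit : IsUnit (f - C (ε f)) := by
    rw [isUnit_iff_constantCoeff, map_sub, constantCoeff_C, isUnit_iff_ne_zero]
    exact sub_ne_zero.mpr (Ne.symm hne)
  have image_zero : ε (f - C (ε f)) = 0 := by
    rw [map_sub, sub_eq_zero]
    exact (ε.commutes _).symm
  exact (unit.map ε).ne_zero image_zero

variable {n : ℕ}

theorem constantCoeff_eq_of_algHom {A : Type*} [CommRing A] [Algebra K A] (ε : A →ₐ[K] K)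
    (θ : MvPowerSeries (Fin n) K →ₐ[K] A) (f : MvPowerSeries (Fin n) K) :
    ε (θ f) = constantCoeff f :=
  algHom_eq_constantCoeff (ε.comp θ) f

theorem constantCoeff_algHom (ψ : MvPowerSeries (Fin n) K →ₐ[K] MvPowerSeries (Fin n) K)
    (f : MvPowerSeries (Fin n) K) : constantCoeff (ψ f) = constantCoeff f :=
  algHom_eq_constantCoeff ((constantCoeffAlgHom (Fin n) K).comp ψ) f

theorem mxR_le_comap (ψ : MvPowerSeries (Fin n) K →ₐ[K] MvPowerSeries (Fin n) K) :
    mxR K n ≤ (mxR K n).comap ψ := fun f hf =>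
  mem_mxR_iff.mpr ((constantCoeff_algHom ψ f).trans (mem_mxR_iff.mp hf))

theorem map_mem_mxR_pow (ψ : MvPowerSeries (Fin n) K →ₐ[K] MvPowerSeries (Fin n) K)
    {f : MvPowerSeries (Fin n) K} {k : ℕ} (hf : f ∈ mxR K n ^ k) : ψ f ∈ mxR K n ^ k :=
  (Ideal.pow_right_mono (mxR_le_comap ψ) k).trans (Ideal.le_comap_pow ψ k) hf

theorem algHom_eqOn_homComponent {A : Type*} [CommRing A] [Algebra K A]
    {ψ χ : MvPowerSeries (Fin n) K →ₐ[K] A} (hX : ∀ i, ψ (X i) = χ (X i)) {d : ℕ}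
    {f : MvPowerSeries (Fin n) K} (hf : f ∈ homComponent K n d) : ψ f = χ f := by
  rw [homComponent_eq_span_X_pow] at hf
  refine Submodule.pow_induction_on_left (C := fun f => ψ f = χ f) _ (fun c => ?_)
    (fun f g hf hg => ?_) (fun m hm f hf => ?_) hf
  · rw [ψ.commutes, χ.commutes]
  · rw [map_add, map_add, hf, hg]
  · have span_le : Submodule.span K (Set.range X) ≤ LinearMap.eqLocus ψ.toLinearMap χ.toLinearMap :=
      Submodule.span_le.mpr (Set.range_subset_iff.mpr hX)
    rw [map_mul, map_mul, hf, show ψ m = χ m from span_le hm]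

theorem algHom_ext_of_X_of_mxR_pow {A : Type*} [CommRing A] [Algebra K A]
    {ψ χ : MvPowerSeries (Fin n) K →ₐ[K] A} (hX : ∀ i, ψ (X i) = χ (X i)) {k : ℕ}
    (hψ : ∀ f ∈ mxR K n ^ k, ψ f = 0) (hχ : ∀ f ∈ mxR K n ^ k, χ f = 0) : ψ = χ :=
  AlgHom.toLinearMap_injective <| linearMap_ext_of_homComponent
    (fun _ _ _ hf => algHom_eqOn_homComponent hX hf) fun f hf => (hψ f hf).trans (hχ f hf).symm

theorem algHom_ext_of_X {ψ χ : MvPowerSeries (Fin n) K →ₐ[K] MvPowerSeries (Fin n) K}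
    (hX : ∀ i, ψ (X i) = χ (X i)) : ψ = χ := by
  ext f α
  have coeff_map_eq_zero (φ : MvPowerSeries (Fin n) K →ₐ[K] MvPowerSeries (Fin n) K)
      {g : MvPowerSeries (Fin n) K} (hg : g ∈ mxR K n ^ (α.degree + 1)) : coeff α (φ g) = 0 :=
    mem_mxR_pow_iff.mp (map_mem_mxR_pow φ hg) α (Nat.lt_succ_self _)
  have coeff_comp_eq : coeff α ∘ₗ ψ.toLinearMap = coeff α ∘ₗ χ.toLinearMap :=
    linearMap_ext_of_homComponent
      (fun _ _ g hg => congrArg (coeff α) (algHom_eqOn_homComponent hX hg))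
      fun g hg => (coeff_map_eq_zero ψ hg).trans (coeff_map_eq_zero χ hg).symm
  exact LinearMap.congr_fun coeff_comp_eq f

theorem exists_algHom_of_mem_mxR {a : Fin n → MvPowerSeries (Fin n) K}
    (ha : ∀ i, a i ∈ mxR K n) :
    ∃ ψ : MvPowerSeries (Fin n) K →ₐ[K] MvPowerSeries (Fin n) K, ∀ i, ψ (X i) = a i :=
  have hasSubst := hasSubst_of_constantCoeff_zero fun i => mem_mxR_iff.mp (ha i)
  ⟨substAlgHom hasSubst, substAlgHom_X hasSubst⟩

theorem exists_algHom_lift {J : Ideal (MvPowerSeries (Fin n) K)} {k : ℕ} (hJ : J ≤ mxR K n)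
    (hk : mxR K n ^ k ≤ J) (θ : MvPowerSeries (Fin n) K →ₐ[K] MvPowerSeries (Fin n) K ⧸ J) :
    ∃ ψ : MvPowerSeries (Fin n) K →ₐ[K] MvPowerSeries (Fin n) K,
      ∀ f, Ideal.Quotient.mk J (ψ f) = θ f := by
  have mem_mxR_of_mk_eq {f g : MvPowerSeries (Fin n) K} (hf : f ∈ mxR K n)
      (hg : Ideal.Quotient.mk J g = θ f) : g ∈ mxR K n := by
    let ε : (MvPowerSeries (Fin n) K ⧸ J) →ₐ[K] K :=
      Ideal.Quotient.liftₐ J (constantCoeffAlgHom (Fin n) K) fun f hf => mem_mxR_iff.mp (hJ hf)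
    calc constantCoeff g = ε (Ideal.Quotient.mk J g) := rfl
      _ = constantCoeff f := hg ▸ constantCoeff_eq_of_algHom ε θ f
      _ = 0 := mem_mxR_iff.mp hf
  have mxR_le_comap_map : mxR K n ≤ ((mxR K n).map (Ideal.Quotient.mk J)).comap θ := by
    intro f hf
    rw [Ideal.mem_comap]
    obtain ⟨g, hg⟩ := Ideal.Quotient.mk_surjective (θ f)
    exact hg ▸ Ideal.mem_map_of_mem _ (mem_mxR_of_mk_eq hf hg)
  have θ_eq_zero (f) (hf : f ∈ mxR K n ^ k) : θ f = 0 := by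
    have mem_pow := (Ideal.pow_right_mono mxR_le_comap_map k).trans (Ideal.le_comap_pow θ k) hf
    rwa [Ideal.mem_comap, ← Ideal.map_pow, Ideal.map_mk_eq_bot_of_le hk] at mem_pow
  choose a ha using fun i => Ideal.Quotient.mk_surjective (θ (X i))
  obtain ⟨ψ, hψ⟩ := exists_algHom_of_mem_mxR fun i => mem_mxR_of_mk_eq (X_mem_mxR i) (ha i)
  refine ⟨ψ, fun f => DFunLike.congr_fun (algHom_ext_of_X_of_mxR_pow (k := k)
    (ψ := (Ideal.Quotient.mkₐ K J).comp ψ) (χ := θ) (fun i => ?_) (fun f hf => ?_) θ_eq_zero) f⟩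
  · rw [← ha, ← hψ]; rfl
  · exact Ideal.Quotient.eq_zero_iff_mem.mpr (hk (map_mem_mxR_pow ψ hf))

theorem map_mul_sub_map_mul {F A B : Type*} [Mul A] [Ring B] [FunLike F A B] [MulHomClass F A B]
    (ψ χ : F) (f g : A) :
    ψ (f * g) - χ (f * g) = (ψ f - χ f) * ψ g + χ f * (ψ g - χ g) := by
  rw [map_mul, map_mul, sub_mul, mul_sub, sub_add_sub_cancel]

theorem algHom_sub_algHom_mem_mxR
    (ψ χ : MvPowerSeries (Fin n) K →ₐ[K] MvPowerSeries (Fin n) K) (f : MvPowerSeries (Fin n) K) :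
    ψ f - χ f ∈ mxR K n := by
  rw [mem_mxR_iff, map_sub, constantCoeff_algHom, constantCoeff_algHom, sub_self]

theorem algHom_sub_algHom_mem_mxR_sq
    {ψ χ : MvPowerSeries (Fin n) K →ₐ[K] MvPowerSeries (Fin n) K}
    (hX : ∀ i, ψ (X i) - χ (X i) ∈ mxR K n ^ 2) {f : MvPowerSeries (Fin n) K}
    (hf : f ∈ mxR K n) : ψ f - χ f ∈ mxR K n ^ 2 := by
  rw [mxR_eq_span_X] at hf
  induction hf using Submodule.span_induction with
  | mem f hf => obtain ⟨i, rfl⟩ := hf; exact hX i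
  | zero => simp
  | add f g _ _ hf hg => rw [map_add, map_add, add_sub_add_comm]; exact add_mem hf hg
  | smul c f hf ihf =>
    rw [smul_eq_mul, mul_comm, map_mul_sub_map_mul]
    refine add_mem (Ideal.mul_mem_right _ _ ihf) ?_
    rw [sq]
    exact Ideal.mul_mem_mul (mxR_le_comap χ (mxR_eq_span_X.ge hf))
      (algHom_sub_algHom_mem_mxR ψ χ c)

theorem algHom_sub_algHom_mem_mxR_pow
    {ψ χ : MvPowerSeries (Fin n) K →ₐ[K] MvPowerSeries (Fin n) K}
    (hX : ∀ i, ψ (X i) - χ (X i) ∈ mxR K n ^ 2) {d : ℕ} {f : MvPowerSeries (Fin n) K}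
    (hf : f ∈ mxR K n ^ d) : ψ f - χ f ∈ mxR K n ^ (d + 1) := by
  induction d generalizing f with
  | zero => simpa using algHom_sub_algHom_mem_mxR ψ χ f
  | succ d ih =>
    rw [pow_succ'] at hf
    induction hf using Submodule.mul_induction_on' with
    | mem_mul_mem f hf g hg =>
      rw [map_mul_sub_map_mul]
      refine add_mem ?_ ?_
      · rw [show d + 1 + 1 = 2 + d by ring, pow_add]
        exact Ideal.mul_mem_mul (algHom_sub_algHom_mem_mxR_sq hX hf) (map_mem_mxR_pow ψ hg)
      · rw [pow_succ']
        exact Ideal.mul_mem_mul (mxR_le_comap χ hf) (ih hg)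
    | add f _ g _ hf hg => rw [map_add, map_add, add_sub_add_comm]; exact add_mem hf hg

theorem exists_sub_algHom_mem_mxR_pow {ψ : MvPowerSeries (Fin n) K →ₐ[K] MvPowerSeries (Fin n) K}
    (hX : ∀ i, ψ (X i) - X i ∈ mxR K n ^ 2) (f : MvPowerSeries (Fin n) K) (k : ℕ) :
    ∃ g, f - ψ g ∈ mxR K n ^ k := by
  induction k with
  | zero => exact ⟨0, by simp⟩
  | succ k ih =>
    obtain ⟨g, hg⟩ := ih
    refine ⟨g + (f - ψ g), ?_⟩
    rw [map_add, ← sub_sub, ← neg_sub, neg_mem_iff]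
    exact algHom_sub_algHom_mem_mxR_pow (χ := .id K _) hX hg

/-- The degree-preserving endomorphism `X i ↦ (linear form of ψ (X i))` of the power series ring:
the action of an endomorphism `ψ` on initial forms. -/
noncomputable def linearPart (ψ : MvPowerSeries (Fin n) K →ₐ[K] MvPowerSeries (Fin n) K) :
    MvPowerSeries (Fin n) K →ₐ[K] MvPowerSeries (Fin n) K :=
  substAlgHom (a := fun i => homogeneousComponent 1 (ψ (X i))) <|
    hasSubst_of_constantCoeff_zero fun i => by
      simp [← coeff_zero_eq_constantCoeff_apply, coeff_homogeneousComponent]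

theorem linearPart_X (ψ : MvPowerSeries (Fin n) K →ₐ[K] MvPowerSeries (Fin n) K) (i : Fin n) :
    linearPart ψ (X i) = homogeneousComponent 1 (ψ (X i)) :=
  substAlgHom_X _ i

theorem X_mem_homComponent (i : Fin n) : X i ∈ homComponent K n 1 := by
  rw [homComponent_eq_span_X_pow, pow_one]
  exact Submodule.subset_span ⟨i, rfl⟩

theorem linearPart_mem_homComponent (ψ : MvPowerSeries (Fin n) K →ₐ[K] MvPowerSeries (Fin n) K)
    {d : ℕ} {f : MvPowerSeries (Fin n) K} (hf : f ∈ homComponent K n d) :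
    linearPart ψ f ∈ homComponent K n d := by
  have map_span_le : (Submodule.span K (Set.range X)).map (linearPart ψ).toLinearMap ≤
      Submodule.span K (Set.range X) := by
    rw [Submodule.map_span_le, ← pow_one (Submodule.span K _), ← homComponent_eq_span_X_pow,
      Set.forall_mem_range]
    exact fun i => (linearPart_X ψ i).symm ▸ homogeneousComponent_mem_homComponent 1 _
  rw [homComponent_eq_span_X_pow] at hf ⊢
  apply pow_le_pow_left' map_span_le d
  rw [← Submodule.map_pow]
  exact Submodule.mem_map_of_mem hf

theorem algHom_sub_linearPart_mem_mxR_pow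
    (ψ : MvPowerSeries (Fin n) K →ₐ[K] MvPowerSeries (Fin n) K) {d : ℕ}
    {f : MvPowerSeries (Fin n) K} (hf : f ∈ mxR K n ^ d) :
    ψ f - linearPart ψ f ∈ mxR K n ^ (d + 1) := by
  refine algHom_sub_algHom_mem_mxR_pow (fun i => ?_) hf
  rw [linearPart_X]
  exact sub_homogeneousComponent_mem_mxR_pow ((pow_one (mxR K n)).symm ▸
    mxR_le_comap ψ (X_mem_mxR i))

theorem homogeneousComponent_algHom
    (ψ : MvPowerSeries (Fin n) K →ₐ[K] MvPowerSeries (Fin n) K) {d : ℕ}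
    {f : MvPowerSeries (Fin n) K} (hf : f ∈ mxR K n ^ d) :
    homogeneousComponent d (ψ f) = linearPart ψ (homogeneousComponent d f) := by
  have hom := homogeneousComponent_mem_homComponent d f
  have sub_mem : ψ f - linearPart ψ (homogeneousComponent d f) ∈ mxR K n ^ (d + 1) := by
    rw [← sub_add_sub_cancel _ (ψ (homogeneousComponent d f)), ← map_sub]
    exact add_mem (map_mem_mxR_pow ψ (sub_homogeneousComponent_mem_mxR_pow hf))
      (algHom_sub_linearPart_mem_mxR_pow ψ (homComponent_le_mxR_pow d hom))
  have := homogeneousComponent_of_mem_mxR_pow sub_mem (Nat.lt_succ_self d)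
  rwa [map_sub, sub_eq_zero, homogeneousComponent_of_mem_homComponent
    (linearPart_mem_homComponent ψ hom), if_pos rfl] at this

theorem linearPart_comp_linearPart
    {φ ψ : MvPowerSeries (Fin n) K →ₐ[K] MvPowerSeries (Fin n) K}
    (hX : ∀ i, φ (ψ (X i)) - X i ∈ mxR K n ^ 2) :
    (linearPart φ).comp (linearPart ψ) = .id K _ := by
  refine algHom_ext_of_X fun i => ?_
  have ψX_mem : ψ (X i) ∈ mxR K n ^ 1 :=
    (pow_one (mxR K n)).symm ▸ mxR_le_comap ψ (X_mem_mxR i)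
  calc linearPart φ (linearPart ψ (X i))
      = homogeneousComponent 1 (φ (ψ (X i))) := by
        rw [linearPart_X, homogeneousComponent_algHom φ ψX_mem]
    _ = homogeneousComponent 1 (X i) := by
        rw [← sub_eq_zero, ← map_sub, homogeneousComponent_of_mem_mxR_pow (hX i) one_lt_two]
    _ = X i := homogeneousComponent_of_mem_homComponent (X_mem_homComponent i) 1

end Endomorphisms

section GradedIso

variable {K : Type*} [Field K] {n : ℕ} {I J : Ideal (MvPowerSeries (Fin n) K)}

theorem homogeneousComponent_mem_initialIdeal {f : MvPowerSeries (Fin n) K} (hf : f ∈ I) {d : ℕ}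
    (hd : f ∈ mxR K n ^ d) : homogeneousComponent d f ∈ initialIdeal I := by
  refine Ideal.subset_span ⟨f, hf, d, ?_, ?_⟩ <;> simp only [degM_eq_degree]
  exacts [mem_mxR_pow_iff.mp hd, fun α => coeff_homogeneousComponent d α f]

theorem initialIdeal_le_iff :
    initialIdeal I ≤ J ↔ ∀ f ∈ I, ∀ d, f ∈ mxR K n ^ d → homogeneousComponent d f ∈ J := by
  refine ⟨fun h f hf d hd => h (homogeneousComponent_mem_initialIdeal hf hd), fun h => ?_⟩
  refine Ideal.span_le.mpr ?_
  rintro g ⟨f, hf, d, hd, hg⟩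
  simp only [degM_eq_degree] at hd hg
  have g_eq : g = homogeneousComponent d f := by
    ext α
    rw [hg, coeff_homogeneousComponent]
  exact g_eq ▸ h f hf d (mem_mxR_pow_iff.mpr hd)

theorem initialIdeal_le_comap_linearPart
    {ψ : MvPowerSeries (Fin n) K →ₐ[K] MvPowerSeries (Fin n) K} (hψ : I ≤ J.comap ψ) :
    initialIdeal I ≤ (initialIdeal J).comap (linearPart ψ) := by
  refine initialIdeal_le_iff.mpr fun f hf d hd => ?_
  rw [Ideal.mem_comap, ← homogeneousComponent_algHom ψ hd]
  have ψf_mem : ψ f ∈ J := hψ hf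
  exact homogeneousComponent_mem_initialIdeal ψf_mem (map_mem_mxR_pow ψ hd)

theorem exists_gradedEquiv_of_algEquiv_of_mem_homComponent
    (g : MvPowerSeries (Fin n) K ≃ₐ[K] MvPowerSeries (Fin n) K)
    (hg : ∀ d, ∀ f ∈ homComponent K n d, g f ∈ homComponent K n d)
    (hg' : ∀ d, ∀ f ∈ homComponent K n d, g.symm f ∈ homComponent K n d)
    (hIJ : initialIdeal I ≤ (initialIdeal J).comap g)
    (hJI : initialIdeal J ≤ (initialIdeal I).comap g.symm) :
    ∃ e : (MvPowerSeries (Fin n) K ⧸ initialIdeal I) ≃ₐ[K]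
        (MvPowerSeries (Fin n) K ⧸ initialIdeal J),
      ∀ d : ℕ, (gradePiece I d).map e.toLinearMap = gradePiece J d := by
  have map_initialIdeal : initialIdeal J = (initialIdeal I).map (g : _ →+* _) := by
    refine le_antisymm (fun f hf => ?_) (Ideal.map_le_iff_le_comap.mpr hIJ)
    rw [← g.apply_symm_apply f]
    exact Ideal.mem_map_of_mem _ (hJI hf)
  have map_homComponent (d : ℕ) : (homComponent K n d).map g.toLinearMap = homComponent K n d := by
    refine le_antisymm (Submodule.map_le_iff_le_comap.mpr (hg d)) fun f hf => ?_
    exact ⟨g.symm f, hg' d f hf, g.apply_symm_apply f⟩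
  refine ⟨Ideal.quotientEquivAlg _ _ g map_initialIdeal, fun d => ?_⟩
  rw [gradePiece, gradePiece, ← Submodule.map_comp]
  conv_rhs => rw [← map_homComponent d, ← Submodule.map_comp]
  rfl

theorem exists_gradedEquiv_of_algEquiv {k : ℕ} (hI : I ≤ mxR K n ^ 2) (hJ : J ≤ mxR K n ^ 2)
    (hIk : mxR K n ^ k ≤ I) (hJk : mxR K n ^ k ≤ J)
    (φ : (MvPowerSeries (Fin n) K ⧸ I) ≃ₐ[K] (MvPowerSeries (Fin n) K ⧸ J)) :
    ∃ e : (MvPowerSeries (Fin n) K ⧸ initialIdeal I) ≃ₐ[K]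
        (MvPowerSeries (Fin n) K ⧸ initialIdeal J),
      ∀ d : ℕ, (gradePiece I d).map e.toLinearMap = gradePiece J d := by
  have sq_le : mxR K n ^ 2 ≤ mxR K n := Ideal.pow_le_self two_ne_zero
  obtain ⟨ψ, hψ⟩ := exists_algHom_lift (hJ.trans sq_le) hJk
    (φ.toAlgHom.comp (Ideal.Quotient.mkₐ K I))
  obtain ⟨χ, hχ⟩ := exists_algHom_lift (hI.trans sq_le) hIk
    (φ.symm.toAlgHom.comp (Ideal.Quotient.mkₐ K J))
  replace hψ (f) : Ideal.Quotient.mk J (ψ f) = φ (Ideal.Quotient.mk I f) := hψ f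
  replace hχ (f) : Ideal.Quotient.mk I (χ f) = φ.symm (Ideal.Quotient.mk J f) := hχ f
  have hχψ (f) : χ (ψ f) - f ∈ I := by
    rw [← Ideal.Quotient.eq, hχ, hψ, φ.symm_apply_apply]
  have hψχ (f) : ψ (χ f) - f ∈ J := by
    rw [← Ideal.Quotient.eq, hψ, hχ, φ.apply_symm_apply]
  have hIJ : I ≤ J.comap ψ := fun f hf => by
    rw [Ideal.mem_comap, ← Ideal.Quotient.eq_zero_iff_mem, hψ,
      Ideal.Quotient.eq_zero_iff_mem.mpr hf, map_zero]
  have hJI : J ≤ I.comap χ := fun f hf => by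
    rw [Ideal.mem_comap, ← Ideal.Quotient.eq_zero_iff_mem, hχ,
      Ideal.Quotient.eq_zero_iff_mem.mpr hf, map_zero]
  exact exists_gradedEquiv_of_algEquiv_of_mem_homComponent
    (.ofAlgHom (linearPart ψ) (linearPart χ) (linearPart_comp_linearPart fun i => hJ (hψχ _))
      (linearPart_comp_linearPart fun i => hI (hχψ _)))
    (fun d f => linearPart_mem_homComponent ψ) (fun d f => linearPart_mem_homComponent χ)
    (initialIdeal_le_comap_linearPart hIJ) (initialIdeal_le_comap_linearPart hJI)

end GradedIso

section Apolarity

variable {R S T : Type*} [CommRing R] [CommRing S] [Algebra R S] [CommRing T] [Algebra R T]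

/-- The largest ideal contained in the kernel of the linear functional `L`: the annihilator of `L`
in Macaulay's inverse system duality, where `S` acts on functionals by multiplication of the
argument. -/
def apolarIdeal (L : S →ₗ[R] R) : Ideal S where
  carrier := {f | ∀ g, L (f * g) = 0}
  zero_mem' g := by rw [zero_mul, map_zero]
  add_mem' hf hg h := by rw [add_mul, map_add, hf, hg, add_zero]
  smul_mem' c f hf g := by rw [smul_eq_mul, mul_comm c, mul_assoc]; exact hf _

theorem mem_apolarIdeal {L : S →ₗ[R] R} {f : S} : f ∈ apolarIdeal L ↔ ∀ g, L (f * g) = 0 :=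
  Iff.rfl

theorem apply_eq_zero_of_mem_apolarIdeal {L : S →ₗ[R] R} {f : S} (hf : f ∈ apolarIdeal L) :
    L f = 0 :=
  mul_one f ▸ hf 1

theorem comap_apolarIdeal {L : T →ₗ[R] R} {ψ : S →ₐ[R] T}
    (hψ : ∀ f, ∃ g, f - ψ g ∈ apolarIdeal L) :
    (apolarIdeal L).comap ψ = apolarIdeal (L ∘ₗ ψ.toLinearMap) := by
  ext f
  simp only [Ideal.mem_comap, mem_apolarIdeal, LinearMap.comp_apply, AlgHom.toLinearMap_apply,
    map_mul]
  refine ⟨fun hf g => hf (ψ g), fun hf g => ?_⟩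
  obtain ⟨g', hg'⟩ := hψ g
  rw [← sub_add_cancel g (ψ g'), mul_add, map_add, hf, add_zero, mul_comm]
  exact hg' _

theorem nonempty_quotient_comap_algEquiv {J : Ideal T} {ψ : S →ₐ[R] T}
    (hψ : ∀ f, ∃ g, f - ψ g ∈ J) : Nonempty ((S ⧸ J.comap ψ) ≃ₐ[R] (T ⧸ J)) := by
  have surjective : Function.Surjective ((Ideal.Quotient.mkₐ R J).comp ψ) := by
    refine (Ideal.Quotient.mk_surjective (I := J)).forall.mpr fun f => ?_
    obtain ⟨g, hg⟩ := hψ f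
    exact ⟨g, (Ideal.Quotient.eq.mpr hg).symm⟩
  have ker_eq : J.comap ψ = RingHom.ker ((Ideal.Quotient.mkₐ R J).comp ψ) := by
    ext f
    exact (Ideal.Quotient.eq_zero_iff_mem (I := J)).symm
  exact ⟨(Ideal.quotientEquivAlgOfEq R ker_eq).trans
    (Ideal.quotientKerAlgEquivOfSurjective surjective)⟩

theorem exists_mem_colon_bot_ne_zero {m J : Ideal S} {k : ℕ} (hJ : J ≠ ⊥)
    (hJm : J * m ^ k = ⊥) : ∃ t ∈ J, t ∈ (⊥ : Ideal S).colon (m : Set S) ∧ t ≠ 0 := by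
  induction k generalizing J with
  | zero => exact absurd hJm (by rwa [pow_zero, mul_one])
  | succ k ih =>
    by_cases hJm' : J * m = ⊥
    · obtain ⟨t, ht, ht0⟩ := Submodule.exists_mem_ne_zero_of_ne_bot hJ
      refine ⟨t, ht, Submodule.mem_colon.mpr fun x hx => ?_, ht0⟩
      exact hJm' ▸ Ideal.mul_mem_mul ht hx
    · obtain ⟨t, ht, ht'⟩ := ih hJm' (by rwa [mul_assoc, ← pow_succ'])
      exact ⟨t, Ideal.mul_le_left ht, ht'⟩

variable {K : Type*} [Field K] [Algebra K S]

theorem apolarIdeal_eq_bot {m : Ideal S} (hm : IsNilpotent m)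
    (hsoc : Module.finrank K (((⊥ : Ideal S).colon (m : Set S)).restrictScalars K) = 1)
    {L : S →ₗ[K] K} {s : S} (hs : s ∈ (⊥ : Ideal S).colon (m : Set S)) (hLs : L s ≠ 0) :
    apolarIdeal L = ⊥ := by
  by_contra hne
  obtain ⟨k, hk⟩ := hm
  obtain ⟨t, htL, ht, ht0⟩ := exists_mem_colon_bot_ne_zero (m := m) (k := k) hne
    (by rw [hk, Ideal.zero_eq_bot, Ideal.mul_bot])
  obtain ⟨c, hc⟩ := exists_smul_eq_of_finrank_eq_one hsoc (x := ⟨t, ht⟩)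
    (Subtype.coe_ne_coe.mp ht0) ⟨s, hs⟩
  have smul_eq : c • t = s := congrArg Subtype.val hc
  rw [← smul_eq, map_smul, apply_eq_zero_of_mem_apolarIdeal htL, smul_zero] at hLs
  exact hLs rfl

theorem ideal_eq_of_le_of_finrank_quotient_eq {I J : Ideal S} [Module.Finite K (S ⧸ I)]
    (hIJ : I ≤ J) (h : Module.finrank K (S ⧸ I) = Module.finrank K (S ⧸ J)) : I = J := by
  have surjective : Function.Surjective (Ideal.Quotient.factorₐ K hIJ) :=
    Ideal.Quotient.factor_surjective hIJ
  have : Module.Finite K (S ⧸ J) :=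
    .of_surjective (Ideal.Quotient.factorₐ K hIJ).toLinearMap surjective
  have injective : Function.Injective (Ideal.Quotient.factorₐ K hIJ).toLinearMap :=
    (LinearMap.injective_iff_surjective_of_finrank_eq_finrank h).mpr surjective
  refine hIJ.antisymm fun f hf => Ideal.Quotient.eq_zero_iff_mem.mp (injective ?_)
  exact (Ideal.Quotient.eq_zero_iff_mem.mpr hf).trans (map_zero _).symm

end Apolarity

section Homogeneous

variable {K : Type*} [Field K] {n : ℕ} {I : Ideal (MvPowerSeries (Fin n) K)}

theorem homogeneousComponent_mem_apolarIdeal (L : MvPowerSeries (Fin n) K →ₗ[K] K) (d e : ℕ)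
    {f : MvPowerSeries (Fin n) K} (hf : f ∈ apolarIdeal (L ∘ₗ homogeneousComponent d)) :
    homogeneousComponent e f ∈ apolarIdeal (L ∘ₗ homogeneousComponent d) := by
  intro g
  rw [LinearMap.comp_apply, mul_comm]
  have hom := homogeneousComponent_mem_homComponent e f
  by_cases hed : e ≤ d
  · obtain ⟨c, rfl⟩ := Nat.exists_eq_add_of_le' hed
    rw [homogeneousComponent_mul_of_mem_homComponent hom, mul_comm,
      ← homogeneousComponent_mul_of_mem_homComponent (homogeneousComponent_mem_homComponent c g),
      add_comm e c]
    exact hf _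
  · rw [homogeneousComponent_of_mem_mxR_pow
      (Ideal.mul_mem_left _ g (homComponent_le_mxR_pow e hom)) (by lia), map_zero]

theorem mxR_pow_eq_span_homComponent (k : ℕ) :
    mxR K n ^ k = Ideal.span (homComponent K n k) := by
  refine le_antisymm ?_ (Ideal.span_le.mpr (homComponent_le_mxR_pow k))
  rw [mxR_eq_span_X, homComponent_eq_span_X_pow, Ideal.span, Submodule.span_pow]
  exact Submodule.span_mono ((Set.pow_subset_pow_left Submodule.subset_span).trans
    (Submodule.pow_subset_pow _))

theorem mxR_pow_le_initialIdeal {k : ℕ} (hk : mxR K n ^ k ≤ I) :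
    mxR K n ^ k ≤ initialIdeal I := by
  rw [mxR_pow_eq_span_homComponent, Ideal.span_le]
  intro f hf
  have f_mem := homComponent_le_mxR_pow k hf
  have := homogeneousComponent_mem_initialIdeal (hk f_mem) f_mem
  rwa [homogeneousComponent_of_mem_homComponent hf, if_pos rfl] at this

theorem initialIdeal_eq_self {k : ℕ} (hk : mxR K n ^ k ≤ I)
    (hI : ∀ f ∈ I, ∀ d, homogeneousComponent d f ∈ I) : initialIdeal I = I := by
  refine le_antisymm (initialIdeal_le_iff.mpr fun f hf d _ => hI f hf d) fun f hf => ?_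
  rw [← sub_add_cancel f (∑ d ∈ Finset.range k, homogeneousComponent d f)]
  refine add_mem (mxR_pow_le_initialIdeal hk (sub_sum_homogeneousComponent_mem_mxR_pow f k))
    (sum_mem fun d _ => ?_)
  have hom := homogeneousComponent_mem_homComponent d f
  have := homogeneousComponent_mem_initialIdeal (hI f hf d) (homComponent_le_mxR_pow d hom)
  rwa [homogeneousComponent_of_mem_homComponent hom, if_pos rfl] at this

theorem nonempty_quotient_initialIdeal_algEquiv {k : ℕ} (hk : mxR K n ^ k ≤ I)
    (hI : I ≤ mxR K n ^ 2) {ψ : MvPowerSeries (Fin n) K →ₐ[K] MvPowerSeries (Fin n) K}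
    (hX : ∀ i, ψ (X i) - X i ∈ mxR K n ^ 2)
    (hψI : ∀ f ∈ I.comap ψ, ∀ d, homogeneousComponent d f ∈ I.comap ψ) :
    Nonempty ((MvPowerSeries (Fin n) K ⧸ initialIdeal I) ≃ₐ[K] (MvPowerSeries (Fin n) K ⧸ I)) := by
  have pow_le_comap : mxR K n ^ k ≤ I.comap ψ := fun f hf => hk (map_mem_mxR_pow ψ hf)
  have comap_le_sq : I.comap ψ ≤ mxR K n ^ 2 := fun f hf => by
    have f_mem : f ∈ mxR K n := by
      rw [mem_mxR_iff, ← constantCoeff_algHom ψ f]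
      exact mem_mxR_iff.mp (Ideal.pow_le_self two_ne_zero (hI hf))
    exact (Submodule.sub_mem_iff_right _ (hI hf)).mp <|
      algHom_sub_algHom_mem_mxR_sq (χ := .id K _) hX f_mem
  obtain ⟨e⟩ := nonempty_quotient_comap_algEquiv (J := I) fun f =>
    (exists_sub_algHom_mem_mxR_pow hX f k).imp fun _ h => hk h
  obtain ⟨e', -⟩ := exists_gradedEquiv_of_algEquiv comap_le_sq hI pow_le_comap hk e
  rw [initialIdeal_eq_self pow_le_comap hψI] at e'
  exact ⟨e'.symm.trans e⟩

end Homogeneous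

section Dimension

variable {K : Type*} [Field K] {n : ℕ} {I : Ideal (MvPowerSeries (Fin n) K)}

theorem nonempty_quotient_mxR_pow_linearEquiv (k : ℕ) :
    Nonempty ((MvPowerSeries (Fin n) K ⧸ mxR K n ^ k) ≃ₗ[K]
      ({α : Fin n →₀ ℕ // α.degree < k} → K)) := by
  let D : MvPowerSeries (Fin n) K →ₗ[K] {α : Fin n →₀ ℕ // α.degree < k} → K :=
    LinearMap.pi fun α => coeff α.1
  have surjective : Function.Surjective D :=
    LinearMap.funLeft_surjective_of_injective K K _ Subtype.val_injective
  have ker_eq : (mxR K n ^ k).restrictScalars K = LinearMap.ker D := by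
    ext f
    rw [Submodule.restrictScalars_mem, mem_mxR_pow_iff, LinearMap.mem_ker, funext_iff,
      Subtype.forall]
    rfl
  exact ⟨(Submodule.Quotient.restrictScalarsEquiv K _).symm ≪≫ₗ
    Submodule.quotEquivOfEq _ _ ker_eq ≪≫ₗ D.quotKerEquivOfSurjective surjective⟩

theorem finite_quotient_of_mxR_pow_le {k : ℕ} (hk : mxR K n ^ k ≤ I) :
    Module.Finite K (MvPowerSeries (Fin n) K ⧸ I) := by
  obtain ⟨e⟩ := nonempty_quotient_mxR_pow_linearEquiv (K := K) (n := n) k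
  have : Finite {α : Fin n →₀ ℕ // α.degree < k} := Finsupp.finite_of_degree_lt k
  have : Module.Finite K (MvPowerSeries (Fin n) K ⧸ mxR K n ^ k) := .equiv e.symm
  exact .of_surjective (Ideal.Quotient.factorₐ K hk).toLinearMap
    (Ideal.Quotient.factor_surjective hk)

theorem finrank_quotient_mxR_sq :
    Module.finrank K (MvPowerSeries (Fin n) K ⧸ mxR K n ^ 2) = n + 1 := by
  obtain ⟨e⟩ := nonempty_quotient_mxR_pow_linearEquiv (K := K) (n := n) 2
  have degree_lt_two : {α : Fin n →₀ ℕ | α.degree < 2} =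
      insert 0 (Set.range fun i => Finsupp.single i 1) := by
    ext α
    rw [Set.mem_insert_iff, Finsupp.range_single_one, ← Finsupp.degree_eq_zero_iff]
    grind
  have : Finite {α : Fin n →₀ ℕ // α.degree < 2} := Finsupp.finite_of_degree_lt 2
  have : Fintype {α : Fin n →₀ ℕ // α.degree < 2} := .ofFinite _
  rw [e.finrank_eq, Module.finrank_fintype_fun_eq_card, ← Nat.card_eq_fintype_card]
  change Set.ncard {α : Fin n →₀ ℕ | α.degree < 2} = n + 1
  rw [degree_lt_two, Set.ncard_insert_of_notMem (by simp), Set.ncard_range_of_injective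
    (Finsupp.single_left_injective one_ne_zero), Nat.card_fin]

theorem finrank_quotient_sup_mxR_pow (I : Ideal (MvPowerSeries (Fin n) K)) (k : ℕ) :
    Module.finrank K (MvPowerSeries (Fin n) K ⧸ (I ⊔ mxR K n ^ k)) =
      ∑ j ∈ Finset.range k, hilbQ I j := by
  have monotone : Monotone fun k =>
      Module.finrank K (MvPowerSeries (Fin n) K ⧸ (I ⊔ mxR K n ^ k)) := by
    intro j k hjk
    have : Module.Finite K (MvPowerSeries (Fin n) K ⧸ (I ⊔ mxR K n ^ k)) :=
      finite_quotient_of_mxR_pow_le le_sup_right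
    have le : I ⊔ mxR K n ^ k ≤ I ⊔ mxR K n ^ j := sup_le_sup_left (Ideal.pow_le_pow_right hjk) I
    exact (Ideal.Quotient.factorₐ K le).toLinearMap.finrank_le_finrank_of_surjective
      (Ideal.Quotient.factor_surjective le)
  have finrank_zero : Module.finrank K (MvPowerSeries (Fin n) K ⧸ (I ⊔ mxR K n ^ 0)) = 0 := by
    rw [pow_zero, Ideal.one_eq_top, sup_top_eq]
    exact Module.finrank_zero_of_subsingleton
  simp only [hilbQ]
  rw [Finset.sum_range_tsub monotone, finrank_zero, tsub_zero]

theorem le_mxR_sq_of_hilbQ (h0 : hilbQ I 0 = 1) (h1 : hilbQ I 1 = n) : I ≤ mxR K n ^ 2 := by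
  have : Module.Finite K (MvPowerSeries (Fin n) K ⧸ mxR K n ^ 2) :=
    finite_quotient_of_mxR_pow_le le_rfl
  have eq_sup : mxR K n ^ 2 = I ⊔ mxR K n ^ 2 := by
    refine ideal_eq_of_le_of_finrank_quotient_eq (K := K) le_sup_right ?_
    rw [finrank_quotient_mxR_sq, finrank_quotient_sup_mxR_pow, Finset.sum_range_succ,
      Finset.sum_range_one, h0, h1, add_comm]
  exact eq_sup ▸ le_sup_left

theorem not_mxR_pow_le_of_hilbQ_ne_zero {k : ℕ} (hk : hilbQ I k ≠ 0) : ¬ mxR K n ^ k ≤ I := by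
  intro hle
  apply hk
  rw [hilbQ, sup_eq_left.mpr hle, sup_eq_left.mpr ((Ideal.pow_le_pow_right k.le_succ).trans hle),
    tsub_self]

end Dimension

section Normalization

variable {K : Type*} [Field K] {n : ℕ}

theorem mk_notMem_span_one {I : Ideal (MvPowerSeries (Fin n) K)} {f : MvPowerSeries (Fin n) K}
    (hf : f ∈ mxR K n) (hfI : f ∉ I) : Ideal.Quotient.mk I f ∉ Submodule.span K {1} := by
  rw [Submodule.mem_span_singleton]
  rintro ⟨c, hc⟩
  have sub_mem : f - C c ∈ I :=
    Ideal.Quotient.eq.mp (hc.symm.trans (Algebra.algebraMap_eq_smul_one c).symm)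
  rcases eq_or_ne c 0 with rfl | hc0
  · rw [map_zero, sub_zero] at sub_mem
    exact hfI sub_mem
  · have unit : IsUnit (f - C c) := by
      rw [isUnit_iff_constantCoeff, map_sub, mem_mxR_iff.mp hf, constantCoeff_C, zero_sub]
      exact (neg_ne_zero.mpr hc0).isUnit
    exact hfI (I.eq_top_of_isUnit_mem sub_mem unit ▸ Submodule.mem_top)

theorem exists_apolarIdeal_eq {I : Ideal (MvPowerSeries (Fin n) K)} {k : ℕ} (hk : k ≠ 0)
    (hle : mxR K n ^ (k + 1) ≤ I) (hnle : ¬ mxR K n ^ k ≤ I) (hI : socDimQ I = 1) :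
    ∃ L : MvPowerSeries (Fin n) K →ₗ[K] K, L 1 = 0 ∧ apolarIdeal L = I := by
  obtain ⟨s, hs, hsI⟩ := SetLike.not_le_iff_exists.mp hnle
  obtain ⟨μ, hμs, hμ1⟩ := Submodule.exists_le_ker_of_notMem
    (mk_notMem_span_one (Ideal.pow_le_self hk hs) hsI)
  have s_mem_socle : Ideal.Quotient.mk I s ∈ (⊥ : Ideal (MvPowerSeries (Fin n) K ⧸ I)).colon
      ((mxR K n).map (Ideal.Quotient.mk I) : Set (MvPowerSeries (Fin n) K ⧸ I)) := by
    refine Submodule.mem_colon.mpr fun x hx => ?_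
    rw [← Ideal.map_mk_eq_bot_of_le hle, pow_succ, Ideal.map_mul]
    exact Ideal.mul_mem_mul (Ideal.mem_map_of_mem _ hs) hx
  have nilpotent : IsNilpotent ((mxR K n).map (Ideal.Quotient.mk I)) :=
    ⟨k + 1, by rw [← Ideal.map_pow, Ideal.map_mk_eq_bot_of_le hle, Ideal.zero_eq_bot]⟩
  have apolar_bot := apolarIdeal_eq_bot nilpotent hI s_mem_socle hμs
  refine ⟨μ ∘ₗ (Ideal.Quotient.mkₐ K I).toLinearMap,
    hμ1 (Submodule.mem_span_singleton_self 1), ?_⟩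
  rw [← comap_apolarIdeal, apolar_bot]
  · exact I.mk_ker
  · intro x
    obtain ⟨f, rfl⟩ := Ideal.Quotient.mk_surjective x
    exact ⟨f, by simp⟩

variable {L : MvPowerSeries (Fin n) K →ₗ[K] K}

theorem mem_apolarIdeal_of_mem_mxR_sq (hL : mxR K n ^ 4 ≤ apolarIdeal L)
    {f : MvPowerSeries (Fin n) K} (hf : f ∈ mxR K n ^ 2) (hf1 : L f = 0)
    (hfX : ∀ i, L (f * X i) = 0) : f ∈ apolarIdeal L := by
  have mul_eq_zero : L ∘ₗ LinearMap.mulLeft K f = 0 := by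
    refine linearMap_ext_of_homComponent (k := 2) (fun d hd g hg => ?_) fun g hg => ?_
    · rw [homComponent_eq_span_X_pow] at hg
      interval_cases d
      · rw [pow_zero, Submodule.mem_one] at hg
        obtain ⟨c, rfl⟩ := hg
        rw [LinearMap.comp_apply, LinearMap.mulLeft_apply, mul_comm, ← Algebra.smul_def, map_smul,
          hf1, smul_zero, LinearMap.zero_apply]
      · rw [pow_one] at hg
        exact Submodule.span_le (p := LinearMap.ker (L ∘ₗ LinearMap.mulLeft K f)).mpr
          (Set.range_subset_iff.mpr hfX) hg
    · have mul_mem : f * g ∈ mxR K n ^ 4 := by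
        rw [show 4 = 2 + 2 from rfl, pow_add]
        exact Ideal.mul_mem_mul hf hg
      exact apply_eq_zero_of_mem_apolarIdeal (L := L) (hL mul_mem)
  exact fun g => LinearMap.congr_fun mul_eq_zero g

theorem exists_mem_mxR_sq_of_apolarIdeal (hL : mxR K n ^ 4 ≤ apolarIdeal L)
    (hdim : Module.finrank K (MvPowerSeries (Fin n) K ⧸ apolarIdeal L) = 2 * n + 2)
    (a : K) (b : Fin n → K) : ∃ p ∈ mxR K n ^ 2, L p = a ∧ ∀ i, L (p * X i) = b i := by
  let F : MvPowerSeries (Fin n) K →ₗ[K]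
      (K × (Fin n → K)) × (MvPowerSeries (Fin n) K ⧸ mxR K n ^ 2) :=
    (L.prod (LinearMap.pi fun i => L ∘ₗ LinearMap.mulRight K (X i))).prod
      (Ideal.Quotient.mkₐ K _).toLinearMap
  have : Module.Finite K (MvPowerSeries (Fin n) K ⧸ mxR K n ^ 2) :=
    finite_quotient_of_mxR_pow_le le_rfl
  have ker_le : LinearMap.ker F ≤ (apolarIdeal L).restrictScalars K := fun f hf => by
    obtain ⟨⟨hf1, hfX⟩, hf⟩ : (L f = 0 ∧ (fun i => L (f * X i)) = 0) ∧
        Ideal.Quotient.mk (mxR K n ^ 2) f = 0 :=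
      (Prod.ext_iff.mp hf).imp_left Prod.ext_iff.mp
    exact mem_apolarIdeal_of_mem_mxR_sq hL (Ideal.Quotient.eq_zero_iff_mem.mp hf) hf1
      (congr_fun hfX)
  have range_eq_top : LinearMap.range F = ⊤ := by
    have : Module.Finite K (MvPowerSeries (Fin n) K ⧸ LinearMap.ker F) :=
      .equiv F.quotKerEquivRange.symm
    refine Submodule.eq_top_of_finrank_eq (le_antisymm (Submodule.finrank_le _) ?_)
    calc Module.finrank K ((K × (Fin n → K)) × (MvPowerSeries (Fin n) K ⧸ mxR K n ^ 2))
        = Module.finrank K (MvPowerSeries (Fin n) K ⧸ apolarIdeal L) := by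
          simp only [Module.finrank_prod, Module.finrank_self, Module.finrank_fin_fun,
            finrank_quotient_mxR_sq, hdim]
          ring
      _ ≤ Module.finrank K (MvPowerSeries (Fin n) K ⧸ LinearMap.ker F) :=
          LinearMap.finrank_le_finrank_of_surjective (Submodule.factor_surjective ker_le)
      _ = Module.finrank K (LinearMap.range F) := F.quotKerEquivRange.finrank_eq
  obtain ⟨p, hp⟩ := LinearMap.range_eq_top.mp range_eq_top ((a, b), 0)
  obtain ⟨hpL, hp⟩ := Prod.ext_iff.mp hp
  obtain ⟨hp1, hpX⟩ := Prod.ext_iff.mp hpL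
  exact ⟨p, Ideal.Quotient.eq_zero_iff_mem.mp hp, hp1, congr_fun hpX⟩

theorem comp_algHom_eq_comp_homogeneousComponent_three (hL : mxR K n ^ 4 ≤ apolarIdeal L)
    {ψ : MvPowerSeries (Fin n) K →ₐ[K] MvPowerSeries (Fin n) K}
    (hX : ∀ i, ψ (X i) - X i ∈ mxR K n ^ 2) (h0 : L 1 = 0) (h1 : ∀ i, L (ψ (X i)) = 0)
    (h2 : ∀ i j, L (ψ (X i) * ψ (X j)) = 0) :
    L ∘ₗ ψ.toLinearMap = L ∘ₗ homogeneousComponent 3 := by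
  have L_eq_zero {f} (hf : f ∈ mxR K n ^ 4) : L f = 0 := apply_eq_zero_of_mem_apolarIdeal (hL hf)
  refine linearMap_ext_of_homComponent (k := 4) (fun d hd f hf => ?_) fun f hf => ?_
  · rw [LinearMap.comp_apply, LinearMap.comp_apply, homogeneousComponent_of_mem_homComponent hf,
      AlgHom.toLinearMap_apply]
    rcases (show d = 3 ∨ d < 3 by lia) with rfl | hd3
    · rw [if_pos rfl, ← sub_eq_zero, ← map_sub]
      exact L_eq_zero
        (algHom_sub_algHom_mem_mxR_pow (χ := .id K _) hX (homComponent_le_mxR_pow 3 hf))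
    · rw [if_neg hd3.ne', map_zero]
      rw [homComponent_eq_span_X_pow] at hf
      interval_cases d
      · rw [pow_zero, Submodule.mem_one] at hf
        obtain ⟨c, rfl⟩ := hf
        rw [ψ.commutes, Algebra.algebraMap_eq_smul_one, map_smul, h0, smul_zero]
      · rw [pow_one] at hf
        exact Submodule.span_le (p := LinearMap.ker (L ∘ₗ ψ.toLinearMap)).mpr
          (Set.range_subset_iff.mpr h1) hf
      · rw [sq, Submodule.span_mul_span] at hf
        refine Submodule.span_le (p := LinearMap.ker (L ∘ₗ ψ.toLinearMap)).mpr ?_ hf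
        rintro _ ⟨_, ⟨i, rfl⟩, _, ⟨j, rfl⟩, rfl⟩
        exact (congrArg L (map_mul ψ _ _)).trans (h2 i j)
  · rw [LinearMap.comp_apply, LinearMap.comp_apply,
      homogeneousComponent_of_mem_mxR_pow hf (by norm_num), map_zero]
    exact L_eq_zero (map_mem_mxR_pow ψ hf)

theorem exists_algHom_comp_eq_comp_homogeneousComponent_three [NeZero (2 : K)]
    (hL : mxR K n ^ 4 ≤ apolarIdeal L)
    (hdim : Module.finrank K (MvPowerSeries (Fin n) K ⧸ apolarIdeal L) = 2 * n + 2)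
    (h0 : L 1 = 0) :
    ∃ ψ : MvPowerSeries (Fin n) K →ₐ[K] MvPowerSeries (Fin n) K,
      (∀ i, ψ (X i) - X i ∈ mxR K n ^ 2) ∧ L ∘ₗ ψ.toLinearMap = L ∘ₗ homogeneousComponent 3 := by
  choose p hp hLp hLpX using fun i => exists_mem_mxR_sq_of_apolarIdeal hL hdim (-L (X i))
    fun j => -L (X i * X j) / 2
  obtain ⟨ψ, hψ⟩ := exists_algHom_of_mem_mxR fun i =>
    add_mem (X_mem_mxR i) (Ideal.pow_le_self two_ne_zero (hp i))
  have sub_mem (i) : ψ (X i) - X i ∈ mxR K n ^ 2 := by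
    rw [hψ, add_sub_cancel_left]
    exact hp i
  refine ⟨ψ, sub_mem, comp_algHom_eq_comp_homogeneousComponent_three hL sub_mem h0 (fun i => ?_)
    fun i j => ?_⟩
  · rw [hψ, map_add, hLp, add_neg_cancel]
  · have p_mul_p : L (p i * p j) = 0 := by
      refine apply_eq_zero_of_mem_apolarIdeal (hL ?_)
      rw [show 4 = 2 + 2 from rfl, pow_add]
      exact Ideal.mul_mem_mul (hp i) (hp j)
    calc L (ψ (X i) * ψ (X j))
        = L (X i * X j) + L (p i * X j) + L (p j * X i) + L (p i * p j) := by
          rw [hψ, hψ, ← map_add, ← map_add, ← map_add]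
          congr 1
          ring
      _ = L (X i * X j) + -L (X i * X j) / 2 + -L (X i * X j) / 2 := by
          rw [hLpX, hLpX, p_mul_p, add_zero, mul_comm (X j)]
      _ = 0 := by
          field_simp
          ring

theorem nonempty_quotient_initialIdeal_algEquiv_of_hilbQ [NeZero (2 : K)]
    {I : Ideal (MvPowerSeries (Fin n) K)} (h0 : hilbQ I 0 = 1) (h1 : hilbQ I 1 = n)
    (h2 : hilbQ I 2 = n) (h3 : hilbQ I 3 = 1) (hm : mxR K n ^ 4 ≤ I) (hG : socDimQ I = 1) :
    Nonempty ((MvPowerSeries (Fin n) K ⧸ initialIdeal I) ≃ₐ[K] (MvPowerSeries (Fin n) K ⧸ I)) := by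
  have hdim : Module.finrank K (MvPowerSeries (Fin n) K ⧸ I) = 2 * n + 2 := by
    have := finrank_quotient_sup_mxR_pow I 4
    rw [sup_eq_left.mpr hm] at this
    simp only [this, Finset.sum_range_succ, Finset.sum_range_zero, h0, h1, h2, h3]
    ring
  obtain ⟨L, hL1, hLI⟩ := exists_apolarIdeal_eq three_ne_zero hm
    (not_mxR_pow_le_of_hilbQ_ne_zero (h3 ▸ one_ne_zero)) hG
  obtain ⟨ψ, hX, hLψ⟩ := exists_algHom_comp_eq_comp_homogeneousComponent_three
    (hLI ▸ hm) (hLI ▸ hdim) hL1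
  refine nonempty_quotient_initialIdeal_algEquiv hm (le_mxR_sq_of_hilbQ h0 h1) hX ?_
  have comap_eq : I.comap ψ = apolarIdeal (L ∘ₗ homogeneousComponent 3) := by
    rw [← hLψ, ← comap_apolarIdeal, hLI]
    exact fun f => (exists_sub_algHom_mem_mxR_pow hX f 4).imp fun _ h => hLI ▸ hm h
  exact comap_eq ▸ fun f hf d => homogeneousComponent_mem_apolarIdeal L 3 d hf

end Normalization

theorem iso_iff_gr_iso_of_hilbert_1nn1_general
    {K : Type*} [Field K] [NeZero (2 : K)] {n : ℕ}
    (I J : Ideal (MvPowerSeries (Fin n) K))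
    (hI0 : hilbQ I 0 = 1) (hI1 : hilbQ I 1 = n) (hI2 : hilbQ I 2 = n) (hI3 : hilbQ I 3 = 1)
    (hIm : mxR K n ^ 4 ≤ I) (hIG : socDimQ I = 1)
    (hJ0 : hilbQ J 0 = 1) (hJ1 : hilbQ J 1 = n) (hJ2 : hilbQ J 2 = n) (hJ3 : hilbQ J 3 = 1)
    (hJm : mxR K n ^ 4 ≤ J) (hJG : socDimQ J = 1) :
    Nonempty ((MvPowerSeries (Fin n) K ⧸ I) ≃ₐ[K] (MvPowerSeries (Fin n) K ⧸ J)) ↔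
      ∃ e : (MvPowerSeries (Fin n) K ⧸ initialIdeal I) ≃ₐ[K]
          (MvPowerSeries (Fin n) K ⧸ initialIdeal J),
        ∀ d : ℕ, Submodule.map e.toLinearMap (gradePiece I d) = gradePiece J d := by
  constructor
  · rintro ⟨φ⟩
    exact exists_gradedEquiv_of_algEquiv (le_mxR_sq_of_hilbQ hI0 hI1) (le_mxR_sq_of_hilbQ hJ0 hJ1)
      hIm hJm φ
  · rintro ⟨e, -⟩
    obtain ⟨grI⟩ := nonempty_quotient_initialIdeal_algEquiv_of_hilbQ hI0 hI1 hI2 hI3 hIm hIG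
    obtain ⟨grJ⟩ := nonempty_quotient_initialIdeal_algEquiv_of_hilbQ hJ0 hJ1 hJ2 hJ3 hJm hJG
    exact ⟨grI.symm.trans (e.trans grJ)⟩

/-- Two Artinian Gorenstein local `K`-algebras `A = R/I`, `B = R/J` with Hilbert
function `{1, n, n, 1}` are isomorphic as `K`-algebras iff their associated
graded rings `gr_m(A) = R/I^*`, `gr_n(B) = R/J^*` are isomorphic as graded
`K`-algebras (i.e. by an isomorphism matching up the graded pieces). -/
theorem iso_iff_gr_iso_of_hilbert_1nn1
    {K : Type*} [Field K] [IsAlgClosed K] [CharZero K] {n : ℕ}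
    (I J : Ideal (MvPowerSeries (Fin n) K))
    (hI0 : hilbQ I 0 = 1) (hI1 : hilbQ I 1 = n) (hI2 : hilbQ I 2 = n) (hI3 : hilbQ I 3 = 1)
    (hIm : mxR K n ^ 4 ≤ I) (hIG : socDimQ I = 1)
    (hJ0 : hilbQ J 0 = 1) (hJ1 : hilbQ J 1 = n) (hJ2 : hilbQ J 2 = n) (hJ3 : hilbQ J 3 = 1)
    (hJm : mxR K n ^ 4 ≤ J) (hJG : socDimQ J = 1) :
    Nonempty ((MvPowerSeries (Fin n) K ⧸ I) ≃ₐ[K] (MvPowerSeries (Fin n) K ⧸ J)) ↔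
      ∃ e : (MvPowerSeries (Fin n) K ⧸ initialIdeal I) ≃ₐ[K]
          (MvPowerSeries (Fin n) K ⧸ initialIdeal J),
        ∀ d : ℕ, Submodule.map e.toLinearMap (gradePiece I d) = gradePiece J d :=
  iso_iff_gr_iso_of_hilbert_1nn1_general I J hI0 hI1 hI2 hI3 hIm hIG hJ0 hJ1 hJ2 hJ3 hJm hJG
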